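/- arXiv:2404.09413 — 2 statements merged into one kernel-verified Lean document; each statement's English description precedes it below -/
import Mathlib

section
/- Let α ∈ (0,1] and let μ = (μ₁, μ₂) ∈ ℝ² satisfy ‖μ‖₁ = |μ₁| + |μ₂| ≤ 1. Let P₀ = Lap_2(0, α⁻¹) be the centered bivariate Laplace distribution with independent coordinates, and let P_{±μ} = ½·Lap_2(μ, α⁻¹) + ½·Lap_2(−μ, α⁻¹) be the symmetric two-component mixture of bivariate Laplace distributions with the same scale. Then the Kullback–Leibler divergence satisfies KL(P_{±μ} ‖ P₀) ≤ 16.7 · α³ · ‖μ‖₁³. -/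
open MeasureTheory Real
open scoped ENNReal

/-- The Laplace distribution on `ℝ` with mean `m` and scale parameter `b`. -/
noncomputable def Lap1' (m b : ℝ) : Measure ℝ :=
  volume.withDensity (fun x => ENNReal.ofReal ((2 * b)⁻¹ * Real.exp (-|x - m| / b)))

/-- The bivariate Laplace distribution with independent coordinates,
mean `(m₁, m₂)` and common scale `b`. -/
noncomputable def Lap2' (m₁ m₂ b : ℝ) : Measure (ℝ × ℝ) :=
  (Lap1' m₁ b).prod (Lap1' m₂ b)

/-!
Since `log r ≤ r - 1`, the divergence of `P` from `Q` is at most their chi-squared divergence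
`E_P[r] - 1`, where `r = dP/dQ`. For a symmetric Laplace mixture, `E_P[r]` averages, over the
relative sign of the two mean vectors, the product over the coordinates of one-dimensional overlaps.
If `s` is a coordinate of the mean divided by the scale, then the overlap is `1 + s² + O(|s|³)` for
equal signs and `1 - s² + O(|s|³)` for opposite signs, so the quadratic terms cancel in the average.
This proves the cubic bound when the scaled `ℓ¹` norm of the mean is at most `1`; beyond `1` the
pointwise bound of `log r` by this norm is already smaller than its cube.
-/

section LogLikelihood

variable {Ω : Type*} [MeasurableSpace Ω]

lemma llr_withDensity_ofReal_ae_eq (Q : Measure Ω) [SigmaFinite Q] {r : Ω → ℝ}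
    (hr : Measurable r) (hr₀ : ∀ z, 0 ≤ r z) :
    llr (Q.withDensity fun z => ENNReal.ofReal (r z)) Q
      =ᵐ[Q.withDensity fun z => ENNReal.ofReal (r z)] fun z => log (r z) := by
  refine (withDensity_absolutelyContinuous Q _).ae_le ?_
  filter_upwards [Q.rnDeriv_withDensity hr.ennreal_ofReal] with z hz
  simp only [llr_def, hz, ENNReal.toReal_ofReal (hr₀ z)]

lemma integral_log_le_integral_sub_one {P : Measure Ω} [IsProbabilityMeasure P] {r : Ω → ℝ}
    (hpos : ∀ z, 0 < r z) (hlog : Integrable (fun z => log (r z)) P) (hr : Integrable r P) :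
    ∫ z, log (r z) ∂P ≤ ∫ z, r z ∂P - 1 :=
  calc ∫ z, log (r z) ∂P
    _ ≤ ∫ z, (r z - 1) ∂P :=
      integral_mono hlog (hr.sub (integrable_const 1)) fun z => log_le_sub_one_of_pos (hpos z)
    _ = ∫ z, r z ∂P - 1 := by rw [integral_sub hr (integrable_const 1)]; simp

end LogLikelihood

section Overlap

lemma exp_neg_le_one_sub_add_sq_div_two {t : ℝ} (ht : 0 ≤ t) : exp (-t) ≤ 1 - t + t ^ 2 / 2 :=
  calc exp (-t)
    _ ≤ (1 + t + t ^ 2 / 2)⁻¹ := by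
      rw [exp_neg]
      exact inv_anti₀ (by positivity) (quadratic_le_exp_of_nonneg ht)
    _ ≤ 1 - t + t ^ 2 / 2 := by
      rw [inv_le_iff_one_le_mul₀ (by positivity)]
      linarith [pow_nonneg ht 4]

lemma integral_exp_neg_abs : ∫ y : ℝ, exp (-|y|) = 2 := by
  rw [integral_comp_abs (f := fun y => exp (-y)), integral_exp_neg_Ioi_zero, mul_one]

lemma integrable_exp_neg_abs : Integrable fun y : ℝ => exp (-|y|) :=
  .of_integral_ne_zero (by rw [integral_exp_neg_abs]; exact two_ne_zero)

lemma integrable_exp_abs_sub_abs_sub_abs (s t : ℝ) :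
    Integrable fun y : ℝ => exp (|y| - |y - s| - |y - t|) := by
  refine (integrable_exp_neg_abs.const_mul (exp (|s| + |t|))).mono' (by fun_prop) (.of_forall ?_)
  intro y
  rw [norm_of_nonneg (exp_pos _).le, ← exp_add, exp_le_exp]
  linarith [abs_sub_abs_le_abs_sub y s, abs_sub_abs_le_abs_sub y t]

/-- The chi-squared inner product of `Lap(s, 1)` and `Lap(t, 1)` relative to `Lap(0, 1)`: the
expectation under `Lap(0, 1)` of the product of their two likelihood ratios. -/
noncomputable def laplaceOverlap (s t : ℝ) : ℝ :=
  (∫ y, exp (|y| - |y - s| - |y - t|)) / 2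

lemma laplaceOverlap_nonneg (s t : ℝ) : 0 ≤ laplaceOverlap s t :=
  div_nonneg (integral_nonneg fun _ => (exp_pos _).le) two_pos.le

lemma laplaceOverlap_neg_neg (s t : ℝ) : laplaceOverlap (-s) (-t) = laplaceOverlap s t := by
  rw [laplaceOverlap, laplaceOverlap,
    ← integral_neg_eq_self (fun y => exp (|y| - |y - s| - |y - t|))]
  congr 2 with y
  rw [abs_neg, ← abs_neg (-y - s), ← abs_neg (-y - t)]
  ring_nf

lemma laplaceOverlap_abs_abs (t : ℝ) : laplaceOverlap |t| |t| = laplaceOverlap t t := by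
  obtain h | h := abs_choice t <;> rw [h]
  exact laplaceOverlap_neg_neg t t

lemma laplaceOverlap_abs_neg_abs (t : ℝ) : laplaceOverlap |t| (-|t|) = laplaceOverlap t (-t) := by
  obtain h | h := abs_choice t <;> rw [h]
  exact laplaceOverlap_neg_neg t (-t)

lemma laplaceOverlap_self_of_nonneg {t : ℝ} (ht : 0 ≤ t) :
    laplaceOverlap t t = 2 / 3 * exp t + 1 / 3 * exp (-(2 * t)) := by
  have hint := integrable_exp_abs_sub_abs_sub_abs t t
  have hIic : ∫ y in Set.Iic 0, exp (|y| - |y - t| - |y - t|) = exp (-(2 * t)) :=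
    calc _ = ∫ y in Set.Iic 0, exp y * exp (-(2 * t)) :=
          setIntegral_congr_fun measurableSet_Iic fun y (hy : y ≤ 0) => by
            simp only [← exp_add, abs_of_nonpos hy, abs_of_nonpos (by linarith : y - t ≤ 0)]
            ring_nf
      _ = exp (-(2 * t)) := by rw [integral_mul_const, integral_exp_Iic_zero, one_mul]
  have hmid : ∫ y in (0)..t, exp (|y| - |y - t| - |y - t|) = (exp t - exp (-(2 * t))) / 3 :=
    calc _ = ∫ y in (0)..t, exp (3 * y - 2 * t) :=
          intervalIntegral.integral_congr fun y hy => by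
            obtain ⟨hy₀, hyt⟩ := Set.uIcc_of_le ht ▸ hy
            simp only [abs_of_nonneg hy₀, abs_of_nonpos (by linarith : y - t ≤ 0)]
            ring_nf
      _ = (exp t - exp (-(2 * t))) / 3 := by
        rw [intervalIntegral.integral_comp_mul_sub (fun y => exp y) three_ne_zero, integral_exp,
          smul_eq_mul]
        ring_nf
  have hIoi : ∫ y in Set.Ioi t, exp (|y| - |y - t| - |y - t|) = exp t :=
    calc _ = ∫ y in Set.Ioi t, exp (-y) * exp (2 * t) :=
          setIntegral_congr_fun measurableSet_Ioi fun y (hy : t < y) => by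
            simp only [← exp_add, abs_of_pos (ht.trans_lt hy), abs_of_pos (sub_pos.2 hy)]
            ring_nf
      _ = exp t := by
        rw [integral_mul_const, integral_exp_neg_Ioi, ← exp_add]
        ring_nf
  rw [laplaceOverlap, ← intervalIntegral.integral_Iic_add_Ioi hint.integrableOn hint.integrableOn,
    ← intervalIntegral.integral_interval_add_Ioi hint.integrableOn hint.integrableOn,
    hIic, hmid, hIoi]
  ring

lemma laplaceOverlap_self_neg_of_nonneg {t : ℝ} (ht : 0 ≤ t) :
    laplaceOverlap t (-t) = 2 * exp (-t) - exp (-(2 * t)) := by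
  have hint := integrable_exp_abs_sub_abs_sub_abs t (-t)
  have heven : ∀ y, |y| - |y - t| - |y - -t| = |(|y|)| - |(|y| - t)| - |(|y| - -t)| := by
    intro y
    obtain h | h := abs_choice y <;> simp only [h, abs_neg]
    rw [← abs_neg (-y - t), ← abs_neg (-y - -t)]
    ring_nf
  have hmid : ∫ y in (0)..t, exp (|y| - |y - t| - |y - -t|) = exp (-t) - exp (-(2 * t)) :=
    calc _ = ∫ y in (0)..t, exp (y - 2 * t) :=
          intervalIntegral.integral_congr fun y hy => by
            obtain ⟨hy₀, hyt⟩ := Set.uIcc_of_le ht ▸ hy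
            simp only [abs_of_nonneg hy₀, abs_of_nonpos (by linarith : y - t ≤ 0),
              abs_of_nonneg (by linarith : 0 ≤ y - -t)]
            ring_nf
      _ = exp (-t) - exp (-(2 * t)) := by
        rw [intervalIntegral.integral_comp_sub_right (fun y => exp y), integral_exp]
        ring_nf
  have hIoi : ∫ y in Set.Ioi t, exp (|y| - |y - t| - |y - -t|) = exp (-t) :=
    calc _ = ∫ y in Set.Ioi t, exp (-y) :=
          setIntegral_congr_fun measurableSet_Ioi fun y (hy : t < y) => by
            simp only [abs_of_pos (ht.trans_lt hy), abs_of_pos (sub_pos.2 hy),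
              abs_of_pos (by linarith : 0 < y - -t)]
            ring_nf
      _ = exp (-t) := integral_exp_neg_Ioi t
  rw [laplaceOverlap, integral_congr_ae (.of_forall fun y => congrArg exp (heven y)),
    integral_comp_abs (f := fun y => exp (|y| - |y - t| - |y - -t|)),
    ← intervalIntegral.integral_interval_add_Ioi hint.integrableOn hint.integrableOn, hmid, hIoi]
  ring

lemma laplaceOverlap_self_le {t : ℝ} (ht : |t| ≤ 1) : laplaceOverlap t t ≤ 1 + |t| ^ 2 := by
  rw [← laplaceOverlap_abs_abs, laplaceOverlap_self_of_nonneg (abs_nonneg t)]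
  have ht₀ := abs_nonneg t
  generalize |t| = x at ht ht₀
  have hexp : exp x ≤ 1 + x + x ^ 2 / 2 + 2 / 9 * x ^ 3 := by
    have h := exp_bound' ht₀ ht (n := 3) three_pos
    norm_num [Finset.sum_range_succ, Nat.factorial] at h
    linarith
  have hexp_neg : exp (-(2 * x)) ≤ (1 - x + x ^ 2 / 2) ^ 2 := by
    rw [show -(2 * x) = (2 : ℕ) * -x by push_cast; ring, exp_nat_mul]
    gcongr
    exact exp_neg_le_one_sub_add_sq_div_two ht₀
  have hx : x ^ 4 ≤ x ^ 3 := pow_le_pow_of_le_one ht₀ ht (by norm_num)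
  linarith [pow_nonneg ht₀ 3]

lemma laplaceOverlap_self_neg_le {t : ℝ} (ht : |t| ≤ 1) :
    laplaceOverlap t (-t) ≤ 1 - |t| ^ 2 + |t| ^ 3 := by
  rw [← laplaceOverlap_abs_neg_abs, laplaceOverlap_self_neg_of_nonneg (abs_nonneg t)]
  have ht₀ := abs_nonneg t
  generalize |t| = x at ht ht₀
  have hsub : x - x ^ 2 / 2 ≤ 1 - exp (-x) := by
    linarith [exp_neg_le_one_sub_add_sq_div_two ht₀]
  have hsub₀ : 0 ≤ x - x ^ 2 / 2 := by
    linarith [pow_le_of_le_one ht₀ ht two_ne_zero]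
  calc 2 * exp (-x) - exp (-(2 * x))
    _ = 1 - (1 - exp (-x)) ^ 2 := by
      rw [show -(2 * x) = (2 : ℕ) * -x by push_cast; ring, exp_nat_mul]
      ring
    _ ≤ 1 - (x - x ^ 2 / 2) ^ 2 := by gcongr
    _ ≤ 1 - x ^ 2 + x ^ 3 := by linarith [pow_nonneg ht₀ 4]

lemma laplaceOverlap_mul_add_mul_le {s t : ℝ} (hst : |s| + |t| ≤ 1) :
    (laplaceOverlap s s * laplaceOverlap t t + laplaceOverlap s (-s) * laplaceOverlap t (-t)) / 2
      ≤ 1 + (|s| + |t|) ^ 3 := by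
  have hs₀ := abs_nonneg s
  have ht₀ := abs_nonneg t
  have hs : |s| ≤ 1 := by linarith
  have ht : |t| ≤ 1 := by linarith
  have hself := mul_le_mul (laplaceOverlap_self_le hs) (laplaceOverlap_self_le ht)
    (laplaceOverlap_nonneg t t) (by positivity)
  have hcross := mul_le_mul (laplaceOverlap_self_neg_le hs) (laplaceOverlap_self_neg_le ht)
    (laplaceOverlap_nonneg t (-t)) (by linarith [pow_le_one₀ hs₀ hs (n := 2), pow_nonneg hs₀ 3])
  -- The quadratic terms of `(1 + x²)(1 + y²)` and `(1 - x² + x³)(1 - y² + y³)` cancel.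
  generalize |s| = x at *
  generalize |t| = y at *
  have hquartic : x ^ 2 * y ^ 2 ≤ x ^ 2 * y := by
    gcongr
    exact pow_le_of_le_one ht₀ ht two_ne_zero
  have hsextic : x ^ 3 * y ^ 3 ≤ x ^ 2 * y ^ 3 := by
    gcongr ?_ * _
    exact pow_le_pow_of_le_one hs₀ hs (by norm_num)
  linarith [pow_nonneg hs₀ 3, pow_nonneg ht₀ 3, mul_nonneg hs₀ (pow_nonneg ht₀ 2),
    mul_nonneg (pow_nonneg hs₀ 2) ht₀, mul_nonneg (pow_nonneg hs₀ 3) (pow_nonneg ht₀ 2)]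

end Overlap

section Laplace

variable {b : ℝ}

instance (m b : ℝ) : SFinite (Lap1' m b) := by
  unfold Lap1'
  infer_instance

lemma isProbabilityMeasure_Lap1' (hb : 0 < b) (m : ℝ) : IsProbabilityMeasure (Lap1' m b) := by
  have hdensity (x : ℝ) : (2 * b)⁻¹ * exp (-|x - m| / b)
      = (2 * b)⁻¹ * exp (-|x / b - m / b|) := by
    rw [← sub_div, abs_div, abs_of_pos hb, neg_div]
  have hint : Integrable fun x => (2 * b)⁻¹ * exp (-|x / b - m / b|) :=
    ((integrable_exp_neg_abs.comp_sub_right (m / b)).comp_div hb.ne').const_mul _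
  constructor
  rw [Lap1', withDensity_apply _ .univ, setLIntegral_univ]
  simp_rw [hdensity]
  rw [← ofReal_integral_eq_lintegral_ofReal hint (.of_forall fun x => by positivity),
    integral_const_mul, Measure.integral_comp_div (fun y => exp (-|y - m / b|)),
    integral_sub_right_eq_self fun y => exp (-|y|), integral_exp_neg_abs, abs_of_pos hb,
    smul_eq_mul, mul_comm b, inv_mul_cancel₀ (by positivity), ENNReal.ofReal_one]

/-- The likelihood ratio of `Lap1' m b` with respect to `Lap1' 0 b`. -/
noncomputable def laplaceRatio (m b x : ℝ) : ℝ :=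
  exp ((|x| - |x - m|) / b)

lemma laplaceRatio_pos (m b x : ℝ) : 0 < laplaceRatio m b x := exp_pos _

@[fun_prop]
lemma continuous_laplaceRatio (m b : ℝ) : Continuous (laplaceRatio m b) := by
  unfold laplaceRatio
  fun_prop

lemma laplaceRatio_mem_Icc (hb : 0 < b) (m x : ℝ) :
    laplaceRatio m b x ∈ Set.Icc (exp (-(|m| / b))) (exp (|m| / b)) := by
  have h : |(|x| - |x - m|) / b| ≤ |m| / b := by
    rw [abs_div, abs_of_pos hb]
    gcongr ?_ / _
    simpa only [sub_sub_cancel] using abs_abs_sub_abs_le x (x - m)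
  exact ⟨exp_le_exp.2 (abs_le.1 h).1, exp_le_exp.2 (abs_le.1 h).2⟩

lemma Lap1'_eq_withDensity (m b : ℝ) :
    Lap1' m b = (Lap1' 0 b).withDensity fun x => ENNReal.ofReal (laplaceRatio m b x) := by
  rw [Lap1', Lap1', ← withDensity_mul _ (by fun_prop) (by fun_prop)]
  congr 1 with x
  rw [Pi.mul_apply, ← ENNReal.ofReal_mul' (laplaceRatio_pos m b x).le, laplaceRatio, mul_assoc,
    ← exp_add]
  ring_nf

lemma integral_laplaceRatio (hb : 0 < b) (m n : ℝ) :
    ∫ x, laplaceRatio n b x ∂Lap1' m b = laplaceOverlap (m / b) (n / b) := by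
  have hdensity (x : ℝ) : (2 * b)⁻¹ * exp (-|x - m| / b) * laplaceRatio n b x
      = (2 * b)⁻¹ * exp (|x / b| - |x / b - m / b| - |x / b - n / b|) := by
    simp only [laplaceRatio, mul_assoc, ← exp_add, ← sub_div, abs_div, abs_of_pos hb]
    ring_nf
  rw [Lap1', integral_withDensity_eq_integral_toReal_smul (by fun_prop) (by simp)]
  simp_rw [ENNReal.toReal_ofReal (mul_nonneg (inv_nonneg.2 (by positivity : 0 ≤ 2 * b))
    (exp_pos _).le), smul_eq_mul, hdensity]
  rw [integral_const_mul,
    Measure.integral_comp_div (fun y => exp (|y| - |y - m / b| - |y - n / b|)), abs_of_pos hb,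
    laplaceOverlap, smul_eq_mul]
  field_simp

lemma isProbabilityMeasure_Lap2' (hb : 0 < b) (m₁ m₂ : ℝ) :
    IsProbabilityMeasure (Lap2' m₁ m₂ b) := by
  have := isProbabilityMeasure_Lap1' hb
  unfold Lap2'
  infer_instance

/-- The likelihood ratio of `Lap2' m₁ m₂ b` with respect to `Lap2' 0 0 b`. -/
noncomputable def laplaceRatio₂ (m₁ m₂ b : ℝ) (z : ℝ × ℝ) : ℝ :=
  laplaceRatio m₁ b z.1 * laplaceRatio m₂ b z.2

lemma laplaceRatio₂_pos (m₁ m₂ b : ℝ) (z : ℝ × ℝ) : 0 < laplaceRatio₂ m₁ m₂ b z :=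
  mul_pos (laplaceRatio_pos _ _ _) (laplaceRatio_pos _ _ _)

@[fun_prop]
lemma continuous_laplaceRatio₂ (m₁ m₂ b : ℝ) : Continuous (laplaceRatio₂ m₁ m₂ b) := by
  unfold laplaceRatio₂
  fun_prop

lemma laplaceRatio₂_mem_Icc (hb : 0 < b) (m₁ m₂ : ℝ) (z : ℝ × ℝ) :
    laplaceRatio₂ m₁ m₂ b z ∈
      Set.Icc (exp (-((|m₁| + |m₂|) / b))) (exp ((|m₁| + |m₂|) / b)) := by
  obtain ⟨hl₁, hu₁⟩ := laplaceRatio_mem_Icc hb m₁ z.1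
  obtain ⟨hl₂, hu₂⟩ := laplaceRatio_mem_Icc hb m₂ z.2
  rw [add_div, neg_add, exp_add, exp_add]
  exact ⟨mul_le_mul hl₁ hl₂ (exp_pos _).le (laplaceRatio_pos _ _ _).le,
    mul_le_mul hu₁ hu₂ (laplaceRatio_pos _ _ _).le (exp_pos _).le⟩

lemma Lap2'_eq_withDensity (m₁ m₂ b : ℝ) :
    Lap2' m₁ m₂ b =
      (Lap2' 0 0 b).withDensity fun z => ENNReal.ofReal (laplaceRatio₂ m₁ m₂ b z) := by
  rw [Lap2', Lap2', Lap1'_eq_withDensity m₁, Lap1'_eq_withDensity m₂,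
    prod_withDensity (by fun_prop) (by fun_prop)]
  congr 1 with z
  exact (ENNReal.ofReal_mul (laplaceRatio_pos _ _ _).le).symm

lemma integral_laplaceRatio₂ (hb : 0 < b) (m₁ m₂ n₁ n₂ : ℝ) :
    ∫ z, laplaceRatio₂ n₁ n₂ b z ∂Lap2' m₁ m₂ b =
      laplaceOverlap (m₁ / b) (n₁ / b) * laplaceOverlap (m₂ / b) (n₂ / b) := by
  rw [← integral_laplaceRatio hb, ← integral_laplaceRatio hb]
  exact integral_prod_mul _ _

lemma integrable_laplaceRatio₂ (hb : 0 < b) (m₁ m₂ : ℝ) (P : Measure (ℝ × ℝ))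
    [IsFiniteMeasure P] : Integrable (laplaceRatio₂ m₁ m₂ b) P :=
  .of_mem_Icc _ _ (by fun_prop) (.of_forall (laplaceRatio₂_mem_Icc hb m₁ m₂))

end Laplace

section Mixture

variable {b : ℝ}

/-- The symmetric mixture of the bivariate Laplace distributions with means `±(m₁, m₂)` and common
scale `b`. -/
noncomputable def laplaceMixture (m₁ m₂ b : ℝ) : Measure (ℝ × ℝ) :=
  (1 / 2 : ℝ≥0∞) • Lap2' m₁ m₂ b + (1 / 2 : ℝ≥0∞) • Lap2' (-m₁) (-m₂) b

lemma isProbabilityMeasure_laplaceMixture (hb : 0 < b) (m₁ m₂ : ℝ) :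
    IsProbabilityMeasure (laplaceMixture m₁ m₂ b) := by
  have := isProbabilityMeasure_Lap2' hb
  exact ⟨by simp [laplaceMixture, ENNReal.inv_two_add_inv_two]⟩

/-- The likelihood ratio of `laplaceMixture m₁ m₂ b` with respect to `Lap2' 0 0 b`. -/
noncomputable def laplaceMixtureRatio (m₁ m₂ b : ℝ) (z : ℝ × ℝ) : ℝ :=
  1 / 2 * laplaceRatio₂ m₁ m₂ b z + 1 / 2 * laplaceRatio₂ (-m₁) (-m₂) b z

lemma laplaceMixtureRatio_pos (m₁ m₂ b : ℝ) (z : ℝ × ℝ) : 0 < laplaceMixtureRatio m₁ m₂ b z :=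
  add_pos (mul_pos one_half_pos (laplaceRatio₂_pos _ _ _ _))
    (mul_pos one_half_pos (laplaceRatio₂_pos _ _ _ _))

@[fun_prop]
lemma continuous_laplaceMixtureRatio (m₁ m₂ b : ℝ) :
    Continuous (laplaceMixtureRatio m₁ m₂ b) := by
  unfold laplaceMixtureRatio
  fun_prop

lemma laplaceMixtureRatio_mem_Icc (hb : 0 < b) (m₁ m₂ : ℝ) (z : ℝ × ℝ) :
    laplaceMixtureRatio m₁ m₂ b z ∈
      Set.Icc (exp (-((|m₁| + |m₂|) / b))) (exp ((|m₁| + |m₂|) / b)) := by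
  have h := convex_Icc _ _ (laplaceRatio₂_mem_Icc hb m₁ m₂ z)
    (abs_neg m₁ ▸ abs_neg m₂ ▸ laplaceRatio₂_mem_Icc hb (-m₁) (-m₂) z)
    one_half_pos.le one_half_pos.le (add_halves (1 : ℝ))
  simpa only [laplaceMixtureRatio, smul_eq_mul] using h

lemma log_laplaceMixtureRatio_mem_Icc (hb : 0 < b) (m₁ m₂ : ℝ) (z : ℝ × ℝ) :
    log (laplaceMixtureRatio m₁ m₂ b z) ∈
      Set.Icc (-((|m₁| + |m₂|) / b)) ((|m₁| + |m₂|) / b) := by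
  have hpos := laplaceMixtureRatio_pos m₁ m₂ b z
  obtain ⟨hl, hu⟩ := laplaceMixtureRatio_mem_Icc hb m₁ m₂ z
  exact ⟨(le_log_iff_exp_le hpos).2 hl, (log_le_iff_le_exp hpos).2 hu⟩

lemma integrable_log_laplaceMixtureRatio (hb : 0 < b) (m₁ m₂ : ℝ) (P : Measure (ℝ × ℝ))
    [IsFiniteMeasure P] : Integrable (fun z => log (laplaceMixtureRatio m₁ m₂ b z)) P :=
  .of_mem_Icc _ _ (continuous_laplaceMixtureRatio m₁ m₂ b).measurable.log.aemeasurable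
    (.of_forall (log_laplaceMixtureRatio_mem_Icc hb m₁ m₂))

lemma integrable_laplaceMixtureRatio (hb : 0 < b) (m₁ m₂ : ℝ) (P : Measure (ℝ × ℝ))
    [IsFiniteMeasure P] : Integrable (laplaceMixtureRatio m₁ m₂ b) P :=
  .of_mem_Icc _ _ (by fun_prop) (.of_forall (laplaceMixtureRatio_mem_Icc hb m₁ m₂))

lemma laplaceMixture_eq_withDensity (m₁ m₂ b : ℝ) :
    laplaceMixture m₁ m₂ b =
      (Lap2' 0 0 b).withDensity fun z => ENNReal.ofReal (laplaceMixtureRatio m₁ m₂ b z) := by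
  have hmeas (m₁ m₂ : ℝ) : Measurable fun z => ENNReal.ofReal (laplaceRatio₂ m₁ m₂ b z) := by
    fun_prop
  have hnonneg (m₁ m₂ : ℝ) (z : ℝ × ℝ) : 0 ≤ 1 / 2 * laplaceRatio₂ m₁ m₂ b z :=
    mul_nonneg one_half_pos.le (laplaceRatio₂_pos m₁ m₂ b z).le
  have hhalf : ENNReal.ofReal (1 / 2) = 1 / 2 := by
    rw [ENNReal.ofReal_div_of_pos two_pos, ENNReal.ofReal_one, ENNReal.ofReal_ofNat]
  rw [laplaceMixture, Lap2'_eq_withDensity m₁, Lap2'_eq_withDensity (-m₁),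
    ← withDensity_smul _ (hmeas _ _), ← withDensity_smul _ (hmeas _ _),
    ← withDensity_add_left ((hmeas _ _).const_smul _)]
  congr 1 with z
  rw [laplaceMixtureRatio, ENNReal.ofReal_add (hnonneg _ _ z) (hnonneg _ _ z),
    ENNReal.ofReal_mul one_half_pos.le, ENNReal.ofReal_mul one_half_pos.le, hhalf]
  rfl

lemma integral_laplaceMixture {m₁ m₂ : ℝ} {f : ℝ × ℝ → ℝ}
    (hf : Integrable f (Lap2' m₁ m₂ b)) (hf_neg : Integrable f (Lap2' (-m₁) (-m₂) b)) :
    ∫ z, f z ∂laplaceMixture m₁ m₂ b =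
      1 / 2 * ∫ z, f z ∂Lap2' m₁ m₂ b + 1 / 2 * ∫ z, f z ∂Lap2' (-m₁) (-m₂) b := by
  rw [laplaceMixture, integral_add_measure (hf.smul_measure (by simp))
    (hf_neg.smul_measure (by simp)), integral_smul_measure, integral_smul_measure]
  simp

lemma integral_laplaceMixtureRatio_Lap2' (hb : 0 < b) (m₁ m₂ n₁ n₂ : ℝ) :
    ∫ z, laplaceMixtureRatio n₁ n₂ b z ∂Lap2' m₁ m₂ b =
      1 / 2 * (laplaceOverlap (m₁ / b) (n₁ / b) * laplaceOverlap (m₂ / b) (n₂ / b))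
        + 1 / 2 * (laplaceOverlap (m₁ / b) (-(n₁ / b)) * laplaceOverlap (m₂ / b) (-(n₂ / b))) := by
  have := isProbabilityMeasure_Lap2' hb m₁ m₂
  simp only [laplaceMixtureRatio]
  rw [integral_add ((integrable_laplaceRatio₂ hb _ _ _).const_mul _)
    ((integrable_laplaceRatio₂ hb _ _ _).const_mul _), integral_const_mul, integral_const_mul,
    integral_laplaceRatio₂ hb, integral_laplaceRatio₂ hb, neg_div, neg_div]

lemma integral_laplaceMixtureRatio (hb : 0 < b) (m₁ m₂ : ℝ) :
    ∫ z, laplaceMixtureRatio m₁ m₂ b z ∂laplaceMixture m₁ m₂ b =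
      (laplaceOverlap (m₁ / b) (m₁ / b) * laplaceOverlap (m₂ / b) (m₂ / b)
        + laplaceOverlap (m₁ / b) (-(m₁ / b)) * laplaceOverlap (m₂ / b) (-(m₂ / b))) / 2 := by
  have := isProbabilityMeasure_Lap2' hb
  have hneg (s : ℝ) : laplaceOverlap (-s) s = laplaceOverlap s (-s) := by
    simpa only [neg_neg] using laplaceOverlap_neg_neg s (-s)
  rw [integral_laplaceMixture (integrable_laplaceMixtureRatio hb _ _ _)
    (integrable_laplaceMixtureRatio hb _ _ _), integral_laplaceMixtureRatio_Lap2' hb,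
    integral_laplaceMixtureRatio_Lap2' hb]
  simp only [neg_div, laplaceOverlap_neg_neg, hneg]
  ring

lemma integral_llr_laplaceMixture (hb : 0 < b) (m₁ m₂ : ℝ) :
    ∫ z, llr (laplaceMixture m₁ m₂ b) (Lap2' 0 0 b) z ∂laplaceMixture m₁ m₂ b =
      ∫ z, log (laplaceMixtureRatio m₁ m₂ b z) ∂laplaceMixture m₁ m₂ b := by
  have := isProbabilityMeasure_Lap2' hb 0 0
  rw [laplaceMixture_eq_withDensity]
  exact integral_congr_ae (llr_withDensity_ofReal_ae_eq _ (by fun_prop)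
    fun z => (laplaceMixtureRatio_pos m₁ m₂ b z).le)

end Mixture

theorem kl_laplace_mixture_le_general {b : ℝ} (hb : 0 < b) (m₁ m₂ : ℝ) :
    ∫ z, llr (laplaceMixture m₁ m₂ b) (Lap2' 0 0 b) z ∂laplaceMixture m₁ m₂ b
      ≤ ((|m₁| + |m₂|) / b) ^ 3 := by
  have := isProbabilityMeasure_laplaceMixture hb m₁ m₂
  have hlog := integrable_log_laplaceMixtureRatio hb m₁ m₂ (laplaceMixture m₁ m₂ b)
  have hnorm : |m₁ / b| + |m₂ / b| = (|m₁| + |m₂|) / b := by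
    rw [abs_div, abs_div, abs_of_pos hb, add_div]
  rw [integral_llr_laplaceMixture hb]
  obtain hsmall | hlarge := le_total ((|m₁| + |m₂|) / b) 1
  · calc ∫ z, log (laplaceMixtureRatio m₁ m₂ b z) ∂laplaceMixture m₁ m₂ b
      _ ≤ ∫ z, laplaceMixtureRatio m₁ m₂ b z ∂laplaceMixture m₁ m₂ b - 1 :=
        integral_log_le_integral_sub_one (laplaceMixtureRatio_pos m₁ m₂ b) hlog
          (integrable_laplaceMixtureRatio hb m₁ m₂ _)
      _ ≤ ((|m₁| + |m₂|) / b) ^ 3 := by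
        rw [integral_laplaceMixtureRatio hb, ← hnorm]
        exact sub_le_iff_le_add'.2 (laplaceOverlap_mul_add_mul_le (hnorm.trans_le hsmall))
  · calc ∫ z, log (laplaceMixtureRatio m₁ m₂ b z) ∂laplaceMixture m₁ m₂ b
      _ ≤ ∫ _, (|m₁| + |m₂|) / b ∂laplaceMixture m₁ m₂ b :=
        integral_mono hlog (integrable_const _)
          fun z => (log_laplaceMixtureRatio_mem_Icc hb m₁ m₂ z).2
      _ = (|m₁| + |m₂|) / b := by simp
      _ ≤ ((|m₁| + |m₂|) / b) ^ 3 := le_self_pow₀ hlarge three_ne_zero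

/-- for `α ∈ (0,1]` and `‖μ‖₁ ≤ 1`, the KL divergence between the
symmetric two-component Laplace mixture `P₊₋ = ½ Lap₂(μ, α⁻¹) + ½ Lap₂(−μ, α⁻¹)`
and the centered Laplace `P₀ = Lap₂(0, α⁻¹)` satisfies
`KL(P₊₋ ‖ P₀) ≤ 16.7 α³ ‖μ‖₁³`, where `KL(P‖Q) = ∫ log (dP/dQ) dP`. -/
theorem kl_laplace_mixture_le (α μ₁ μ₂ : ℝ) (hα : α ∈ Set.Ioc (0 : ℝ) 1)
    (hμ : |μ₁| + |μ₂| ≤ 1) :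
    (∫ x, Real.log
        ((((1 / 2 : ℝ≥0∞) • Lap2' μ₁ μ₂ α⁻¹ + (1 / 2 : ℝ≥0∞) • Lap2' (-μ₁) (-μ₂) α⁻¹).rnDeriv
              (Lap2' 0 0 α⁻¹) x).toReal)
      ∂((1 / 2 : ℝ≥0∞) • Lap2' μ₁ μ₂ α⁻¹ + (1 / 2 : ℝ≥0∞) • Lap2' (-μ₁) (-μ₂) α⁻¹))
      ≤ 16.7 * α ^ 3 * (|μ₁| + |μ₂|) ^ 3 := by
  have hkl := kl_laplace_mixture_le_general (inv_pos.2 hα.1) μ₁ μ₂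
  have hα₀ : 0 ≤ α := hα.1.le
  have hcube : 0 ≤ α ^ 3 * (|μ₁| + |μ₂|) ^ 3 := by positivity
  rw [div_inv_eq_mul, mul_pow] at hkl
  exact hkl.trans (by linarith)
end

section
/- Let α ∈ (0,1], δ ∈ (0,1], R > 0, d ≥ 1 and n ≥ 2 ln(12/δ). Let (b₁, v₁),…,(b_n, v_n) be i.i.d. random pairs with b_i ∈ {0,1} and v_i ∈ ℝ^d satisfying ‖v_i‖₂ ≤ R almost surely; set ψ = E[b₁] and λ = E[v₁ | b₁ = 1]. Let L′₁,…,L′_n be i.i.d. ∼ Lap_1(0, α⁻¹) and L₁,…,L_n be i.i.d. ∼ Lap_d(0, α⁻¹), all independent of the data and of each other. Define ψ̂ = n⁻¹( Σ b_i + 3 Σ L′_i ) and λ̂ = Σ b_i v_i + 3√d · R · Σ L_i. If ψ ≥ 18 d ln(24d/δ)/(α√n), then with probability at least 1 − δ, ‖ λ̂/(ψ̂ n) − λ ‖₂ ≤ (19d + 29) · R · ln(24d/δ) / (α ψ √n). -/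
open MeasureTheory Real

/-- The centered Laplace distribution on `ℝ` with scale parameter `b`. -/
noncomputable def Lap1 (b : ℝ) : Measure ℝ :=
  volume.withDensity (fun x => ENNReal.ofReal ((2 * b)⁻¹ * Real.exp (-|x| / b)))

/-- The centered `d`-dimensional Laplace distribution with independent coordinates
and common scale `b`, as a measure on Euclidean space. -/
noncomputable def LapE (d : ℕ) (b : ℝ) : Measure (EuclideanSpace ℝ (Fin d)) :=
  volume.withDensity
    (fun x => ENNReal.ofReal (∏ i, (2 * b)⁻¹ * Real.exp (-|x i| / b)))

/-!
Up to a deterministic computation, the error is governed by four sums: the centered indicators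
`∑ (bᵢ - ψ)`, the vectors `∑ bᵢ (vᵢ - λ)`, which have mean zero because `λ` is the average of `v`
over `{b = 1}`, and the two noise sums. Each is controlled by a tail bound of its own and the four
failure probabilities are added, so the data and the two noise families may be arbitrarily coupled.
The vector sums are treated coordinatewise, at the price of a factor `d` in the failure probability
and `√d` in the norm.

The data sums are handled by Hoeffding's inequality. For a sum `S` of `n` Laplace variables of scale
`b`, the exponential Markov inequality at `t = ± 1 / (b√n)` suffices, since there
`𝔼 exp (t S) = (1 - 1 / n)⁻ⁿ ≤ e²`.
-/

open ProbabilityTheory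

lemma integral_exp_mul_sub_mul_abs {a s : ℝ} (hs : |s| < a) :
    ∫ x, exp (s * x - a * |x|) = (a + s)⁻¹ + (a - s)⁻¹ := by
  obtain ⟨hs_neg, hs_pos⟩ := abs_lt.1 hs
  have h_add : 0 < a + s := by linarith
  have h_sub : s - a < 0 := by linarith
  have eq_Iic : Set.EqOn (fun x => exp ((a + s) * x)) (fun x => exp (s * x - a * |x|))
      (Set.Iic 0) := fun x hx => by
    dsimp only
    rw [abs_of_nonpos (Set.mem_Iic.1 hx)]
    ring_nf
  have eq_Ioi : Set.EqOn (fun x => exp ((s - a) * x)) (fun x => exp (s * x - a * |x|))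
      (Set.Ioi 0) := fun x hx => by
    dsimp only
    rw [abs_of_pos (Set.mem_Ioi.1 hx)]
    ring_nf
  rw [← intervalIntegral.integral_Iic_add_Ioi
      ((integrableOn_exp_mul_Iic h_add 0).congr_fun eq_Iic measurableSet_Iic)
      ((integrableOn_exp_mul_Ioi h_sub 0).congr_fun eq_Ioi measurableSet_Ioi),
    ← setIntegral_congr_fun measurableSet_Iic eq_Iic,
    ← setIntegral_congr_fun measurableSet_Ioi eq_Ioi,
    integral_exp_mul_Iic h_add, integral_exp_mul_Ioi h_sub, mul_zero, mul_zero, exp_zero,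
    one_div, ← neg_sub a s, neg_div_neg_eq, one_div]

lemma integral_laplace_density_mul_exp {b t : ℝ} (hb : 0 < b) (ht : |b * t| < 1) :
    ∫ x, (2 * b)⁻¹ * exp (-|x| / b) * exp (t * x) = (1 - (b * t) ^ 2)⁻¹ := by
  have ht' : |t| < b⁻¹ := by
    rwa [abs_mul, abs_of_pos hb, ← lt_div_iff₀' hb, one_div] at ht
  calc ∫ x, (2 * b)⁻¹ * exp (-|x| / b) * exp (t * x)
      = ∫ x, (2 * b)⁻¹ * exp (t * x - b⁻¹ * |x|) := by
        congr with x
        rw [mul_assoc, ← exp_add]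
        ring_nf
    _ = (2 * b)⁻¹ * ((b⁻¹ + t)⁻¹ + (b⁻¹ - t)⁻¹) := by
        rw [integral_const_mul, integral_exp_mul_sub_mul_abs ht']
    _ = (1 - (b * t) ^ 2)⁻¹ := by
        obtain ⟨ht_neg, ht_pos⟩ := abs_lt.1 ht
        have h_add : 1 + b * t ≠ 0 := by linarith
        have h_sub : 1 - b * t ≠ 0 := by linarith
        rw [show b⁻¹ + t = (1 + b * t) / b by field_simp,
          show b⁻¹ - t = (1 - b * t) / b by field_simp,
          show 1 - (b * t) ^ 2 = (1 + b * t) * (1 - b * t) by ring]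
        field_simp
        ring

lemma integral_laplace_density {b : ℝ} (hb : 0 < b) :
    ∫ x, (2 * b)⁻¹ * exp (-|x| / b) = 1 := by
  simpa using integral_laplace_density_mul_exp (t := 0) hb (by simp)

lemma integrable_laplace_density {b : ℝ} (hb : 0 < b) :
    Integrable fun x : ℝ => (2 * b)⁻¹ * exp (-|x| / b) :=
  .of_integral_ne_zero ((integral_laplace_density hb).trans_ne one_ne_zero)

lemma mgf_id_lap1 {b t : ℝ} (hb : 0 < b) (ht : |b * t| < 1) :
    mgf id (Lap1 b) t = (1 - (b * t) ^ 2)⁻¹ := by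
  rw [mgf, Lap1, integral_withDensity_eq_integral_toReal_smul (by fun_prop) (by simp),
    ← integral_laplace_density_mul_exp hb ht]
  congr with x
  rw [ENNReal.toReal_ofReal (by positivity), smul_eq_mul, id]

lemma isProbabilityMeasure_lap1 {b : ℝ} (hb : 0 < b) : IsProbabilityMeasure (Lap1 b) := by
  rw [isProbabilityMeasure_iff_real, ← mgf_zero' (X := id), mgf_id_lap1 hb (by simp)]
  simp

lemma pi_withDensity_ofReal {ι : Type*} [Fintype ι] {α : ι → Type*} [∀ i, MeasurableSpace (α i)]
    {μ : ∀ i, Measure (α i)} [∀ i, SigmaFinite (μ i)] {f : ∀ i, α i → ℝ}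
    (hf : ∀ i, Integrable (f i) (μ i)) (hf0 : ∀ i x, 0 ≤ f i x) :
    Measure.pi (fun i => (μ i).withDensity fun x => ENNReal.ofReal (f i x))
      = (Measure.pi μ).withDensity fun x => ENNReal.ofReal (∏ i, f i (x i)) := by
  refine Measure.pi_eq fun s hs => ?_
  simp_rw [withDensity_apply _ (hs _)]
  rw [withDensity_apply _ (.univ_pi hs), Measure.restrict_pi_pi,
    ← ofReal_integral_eq_lintegral_ofReal (.fintype_prod_dep fun i => (hf i).restrict)
      (.of_forall fun x => Finset.prod_nonneg fun i _ => hf0 i (x i)),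
    integral_fintype_prod_eq_prod,
    ENNReal.ofReal_prod_of_nonneg fun i _ => integral_nonneg (hf0 i)]
  exact Finset.prod_congr rfl fun i _ =>
    ofReal_integral_eq_lintegral_ofReal (hf i).restrict (.of_forall (hf0 i))

lemma measurePreserving_withDensity_comp {α β : Type*} [MeasurableSpace α] [MeasurableSpace β]
    {μ : Measure α} {ν : Measure β} {g : α → β} (hg : MeasurePreserving g μ ν)
    {f : β → ENNReal} (hf : Measurable f) :
    MeasurePreserving g (μ.withDensity (f ∘ g)) (ν.withDensity f) := by
  refine ⟨hg.measurable, ?_⟩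
  ext s hs
  rw [Measure.map_apply hg.measurable hs, withDensity_apply _ hs,
    withDensity_apply _ (hg.measurable hs)]
  exact hg.setLIntegral_comp_preimage hs hf

lemma measurePreserving_ofLp_lapE (d : ℕ) {b : ℝ} (hb : 0 < b) :
    MeasurePreserving WithLp.ofLp (LapE d b) (Measure.pi fun _ => Lap1 b) := by
  have h_meas : Measurable fun x : Fin d → ℝ =>
      ENNReal.ofReal (∏ i, (2 * b)⁻¹ * exp (-|x i| / b)) := by fun_prop
  have h_pi : Measure.pi (fun _ : Fin d => Lap1 b)
      = volume.withDensity fun x => ENNReal.ofReal (∏ i, (2 * b)⁻¹ * exp (-|x i| / b)) :=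
    pi_withDensity_ofReal (fun _ => integrable_laplace_density hb) fun _ _ => by positivity
  have h := measurePreserving_withDensity_comp (PiLp.volume_preserving_ofLp (Fin d)) h_meas
  rw [← h_pi] at h
  exact h

lemma isProbabilityMeasure_lapE (d : ℕ) {b : ℝ} (hb : 0 < b) :
    IsProbabilityMeasure (LapE d b) := by
  have := isProbabilityMeasure_lap1 hb
  exact (measurePreserving_ofLp_lapE d hb).hasLaw.isProbabilityMeasure

lemma measurePreserving_apply_lapE {d : ℕ} {b : ℝ} (hb : 0 < b) (j : Fin d) :
    MeasurePreserving (fun y : EuclideanSpace ℝ (Fin d) => y j) (LapE d b) (Lap1 b) := by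
  have := isProbabilityMeasure_lap1 hb
  exact (measurePreserving_eval (fun _ => Lap1 b) j).comp (measurePreserving_ofLp_lapE d hb)

section Tails

variable {Ω : Type*} [MeasurableSpace Ω] {P : Measure Ω}

lemma iIndepFun_of_hasLaw_pi {ι : Type*} [Fintype ι] {E : ι → Type*} [∀ i, MeasurableSpace (E i)]
    {μ : ∀ i, Measure (E i)} [∀ i, IsProbabilityMeasure (μ i)] {X : Ω → ∀ i, E i}
    (hX : HasLaw X (Measure.pi μ) P) : iIndepFun (fun i ω => X ω i) P := by
  have := hX.isProbabilityMeasure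
  exact (iIndepFun_iff_hasLaw_pi_pi fun i =>
    (measurePreserving_eval μ i).fun_comp_hasLaw hX).2 hX

lemma measureReal_le_abs_le_add [IsFiniteMeasure P] (S : Ω → ℝ) (ε : ℝ) :
    P.real {ω | ε ≤ |S ω|} ≤ P.real {ω | ε ≤ S ω} + P.real {ω | S ω ≤ -ε} := by
  refine (measureReal_mono fun ω (hω : ε ≤ |S ω|) => ?_).trans
    (measureReal_union_le _ _)
  exact (le_abs.1 hω).imp id le_neg_of_le_neg

variable {ι : Type*} [Fintype ι]

lemma measureReal_le_abs_sum_le_of_mem_Icc {X : ι → Ω → ℝ} (h_indep : iIndepFun X P)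
    (hm : ∀ i, AEMeasurable (X i) P) {a b : ℝ} (hX : ∀ i, ∀ᵐ ω ∂P, X i ω ∈ Set.Icc a b)
    (h0 : ∀ i, P[X i] = 0) {ε : ℝ} (hε : 0 ≤ ε) :
    P.real {ω | ε ≤ |∑ i, X i ω|}
      ≤ 2 * exp (-2 * ε ^ 2 / (Fintype.card ι * (b - a) ^ 2)) := by
  have := h_indep.isProbabilityMeasure
  have h_sum : HasSubgaussianMGF (fun ω => ∑ i, X i ω) (∑ _i : ι, (‖b - a‖₊ / 2) ^ 2) P :=
    .sum_of_iIndepFun h_indep fun i _ =>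
      hasSubgaussianMGF_of_mem_Icc_of_integral_eq_zero (hm i) (hX i) (h0 i)
  have h_exp : -ε ^ 2 / (2 * (∑ _i : ι, (‖b - a‖₊ / 2) ^ 2 : NNReal))
      = -2 * ε ^ 2 / (Fintype.card ι * (b - a) ^ 2) := by
    simp [div_pow]
    field_simp
  rw [two_mul, ← h_exp]
  refine (measureReal_le_abs_le_add _ ε).trans (add_le_add (h_sum.measure_ge_le hε) ?_)
  simpa only [Pi.neg_apply, le_neg] using h_sum.neg.measure_ge_le hε

lemma measureReal_le_abs_sum_comp_le {E : Type*} [MeasurableSpace E] {ν : Measure E}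
    [Nonempty ι] {V : ι → Ω → E} (hV : ∀ i, HasLaw (V i) ν P) (h_indep : iIndepFun V P)
    {f : E → ℝ} (hf : Measurable f) {a b : ℝ} (hab : a < b)
    (hf_mem : ∀ᵐ x ∂ν, f x ∈ Set.Icc a b) (hf_zero : ∫ x, f x ∂ν = 0) {l : ℝ} (hl : 1 ≤ l) :
    P.real {ω | (b - a) * (l * √(Fintype.card ι)) ≤ |∑ i, f (V i ω)|} ≤ 2 * exp (-l) := by
  have h_card : (0 : ℝ) < Fintype.card ι := mod_cast Fintype.card_pos
  have h_width : 0 < b - a := sub_pos.2 hab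
  have h_mem : ∀ i, ∀ᵐ ω ∂P, f (V i ω) ∈ Set.Icc a b := fun i =>
    ((hV i).ae_iff (measurableSet_Icc.mem.comp hf)).2 hf_mem
  have h_zero : ∀ i, P[f ∘ V i] = 0 := fun i =>
    ((hV i).integral_comp hf.aestronglyMeasurable).trans hf_zero
  have h_tail := measureReal_le_abs_sum_le_of_mem_Icc (h_indep.comp (fun _ => f) fun _ => hf)
    (fun i => hf.comp_aemeasurable (hV i).aemeasurable) h_mem h_zero
    (ε := (b - a) * (l * √(Fintype.card ι))) (by positivity)
  refine h_tail.trans ?_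
  rw [mul_pow, mul_pow, sq_sqrt h_card.le]
  gcongr
  rw [show -2 * ((b - a) ^ 2 * (l ^ 2 * Fintype.card ι)) / (Fintype.card ι * (b - a) ^ 2)
    = -2 * l ^ 2 by field_simp]
  nlinarith

lemma inv_one_sub_le_exp_two_mul {x : ℝ} (hx0 : 0 ≤ x) (hx : x ≤ 1 / 2) :
    (1 - x)⁻¹ ≤ exp (2 * x) := by
  refine le_trans ?_ (add_one_le_exp _)
  rw [inv_le_iff_one_le_mul₀ (by linarith)]
  nlinarith

lemma mgf_sum_lap1 {X : ι → Ω → ℝ} {b t : ℝ} (hb : 0 < b) (ht : |b * t| < 1)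
    (hX : ∀ i, HasLaw (X i) (Lap1 b) P) (h_indep : iIndepFun X P) :
    mgf (fun ω => ∑ i, X i ω) P t = ((1 - (b * t) ^ 2)⁻¹) ^ Fintype.card ι := by
  have h_mgf : ∀ i, mgf (X i) P t = (1 - (b * t) ^ 2)⁻¹ := fun i => by
    rw [← mgf_id_map (hX i).aemeasurable, (hX i).map_eq, mgf_id_lap1 hb ht]
  have h_sum := h_indep.mgf_sum₀ (t := t) (fun i => (hX i).aemeasurable) Finset.univ
  simpa only [Finset.sum_fn, h_mgf, Finset.prod_const, Finset.card_univ] using h_sum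

lemma integrable_exp_mul_sum_lap1 {X : ι → Ω → ℝ} {b t : ℝ} (hb : 0 < b) (ht : |b * t| < 1)
    (hX : ∀ i, HasLaw (X i) (Lap1 b) P) (h_indep : iIndepFun X P) :
    Integrable (fun ω => exp (t * ∑ i, X i ω)) P := by
  have := h_indep.isProbabilityMeasure
  have h_pos : 0 < 1 - (b * t) ^ 2 := sub_pos.2 ((sq_lt_one_iff_abs_lt_one _).2 ht)
  rw [← mgf_pos_iff, mgf_sum_lap1 hb ht hX h_indep]
  positivity

lemma integrable_and_mgf_sum_lap1_le {X : ι → Ω → ℝ} {b t : ℝ} (hb : 0 < b)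
    (h_card : 2 ≤ Fintype.card ι) (ht : (b * t) ^ 2 = 1 / Fintype.card ι)
    (hX : ∀ i, HasLaw (X i) (Lap1 b) P) (h_indep : iIndepFun X P) :
    Integrable (fun ω => exp (t * ∑ i, X i ω)) P ∧ mgf (fun ω => ∑ i, X i ω) P t ≤ exp 2 := by
  have h_half : (1 : ℝ) / Fintype.card ι ≤ 1 / 2 := by
    gcongr
    exact_mod_cast h_card
  have h_lt : |b * t| < 1 := by
    rw [← sq_lt_one_iff_abs_lt_one, ht]
    linarith
  refine ⟨integrable_exp_mul_sum_lap1 hb h_lt hX h_indep, ?_⟩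
  rw [mgf_sum_lap1 hb h_lt hX h_indep, ht]
  calc ((1 - 1 / Fintype.card ι : ℝ)⁻¹) ^ Fintype.card ι
      ≤ exp (2 * (1 / Fintype.card ι)) ^ Fintype.card ι := by
        gcongr
        · exact inv_nonneg.2 (by linarith)
        · exact inv_one_sub_le_exp_two_mul (by positivity) h_half
    _ = exp 2 := by
        rw [← exp_nat_mul]
        field_simp

lemma measureReal_le_abs_sum_lap1_le {X : ι → Ω → ℝ} {b : ℝ} (hb : 0 < b)
    (h_card : 2 ≤ Fintype.card ι) (hX : ∀ i, HasLaw (X i) (Lap1 b) P) (h_indep : iIndepFun X P)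
    (l : ℝ) :
    P.real {ω | (l + 2) * (b * √(Fintype.card ι)) ≤ |∑ i, X i ω|} ≤ 2 * exp (-l) := by
  have := h_indep.isProbabilityMeasure
  have hn : (0 : ℝ) < Fintype.card ι := by positivity
  set t := (b * √(Fintype.card ι))⁻¹ with ht
  have ht0 : 0 < t := by positivity
  have hbt : (b * t) ^ 2 = 1 / Fintype.card ι := by
    rw [ht, mul_inv, mul_inv_cancel_left₀ hb.ne', inv_pow, sq_sqrt hn.le, one_div]
  obtain ⟨h_int, h_mgf⟩ := integrable_and_mgf_sum_lap1_le hb h_card hbt hX h_indep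
  obtain ⟨h_int_neg, h_mgf_neg⟩ := integrable_and_mgf_sum_lap1_le (t := -t) hb h_card
    (by rw [mul_neg, neg_sq, hbt]) hX h_indep
  have h_exp : exp (-l) = exp (-t * ((l + 2) * t⁻¹)) * exp 2 := by
    rw [← exp_add]
    congr 1
    field_simp
    ring
  rw [← inv_inv (b * √_), ← ht, two_mul]
  refine (measureReal_le_abs_le_add _ _).trans (add_le_add ?_ ?_)
  · refine (measure_ge_le_exp_mul_mgf _ ht0.le h_int).trans ?_
    rw [h_exp]
    gcongr
  · refine (measure_le_le_exp_mul_mgf _ (neg_nonpos.2 ht0.le) h_int_neg).trans ?_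
    rw [h_exp, mul_neg, ← neg_mul, neg_neg]
    gcongr

lemma norm_le_sqrt_card_mul_of_forall_abs_le {y : EuclideanSpace ℝ ι} {M : ℝ} (hM : 0 ≤ M)
    (hy : ∀ j, |y j| ≤ M) : ‖y‖ ≤ √(Fintype.card ι) * M := by
  rw [EuclideanSpace.norm_eq]
  refine sqrt_le_iff.2 ⟨by positivity, ?_⟩
  calc ∑ j, ‖y j‖ ^ 2 ≤ ∑ _j : ι, M ^ 2 := by
        gcongr with j
        exact hy j
    _ = (√(Fintype.card ι) * M) ^ 2 := by
        rw [mul_pow, sq_sqrt (Nat.cast_nonneg _)]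
        simp

lemma measureReal_sqrt_card_mul_lt_norm_le [IsFiniteMeasure P] {Y : Ω → EuclideanSpace ℝ ι}
    {ε p : ℝ} (hε : 0 ≤ ε) (hY : ∀ j, P.real {ω | ε ≤ |Y ω j|} ≤ p) :
    P.real {ω | √(Fintype.card ι) * ε < ‖Y ω‖} ≤ Fintype.card ι * p := by
  calc P.real {ω | √(Fintype.card ι) * ε < ‖Y ω‖}
      ≤ P.real (⋃ j, {ω | ε ≤ |Y ω j|}) := by
        refine measureReal_mono fun ω (hω : _ < ‖Y ω‖) => ?_
        contrapose! hω
        simp only [Set.mem_iUnion, Set.mem_ofPred_eq, not_exists, not_le] at hω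
        exact norm_le_sqrt_card_mul_of_forall_abs_le hε fun j => (hω j).le
    _ ≤ ∑ _j : ι, p := (measureReal_iUnion_fintype_le _).trans (by gcongr with j; exact hY j)
    _ = Fintype.card ι * p := by simp

lemma measureReal_lt_norm_sum_lapE_le {d : ℕ} {Y : ι → Ω → EuclideanSpace ℝ (Fin d)} {b : ℝ}
    (hb : 0 < b) (h_card : 2 ≤ Fintype.card ι) (hY : ∀ i, HasLaw (Y i) (LapE d b) P)
    (h_indep : iIndepFun Y P) {l : ℝ} (hl : -2 ≤ l) :
    P.real {ω | √d * ((l + 2) * (b * √(Fintype.card ι))) < ‖∑ i, Y i ω‖}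
      ≤ d * (2 * exp (-l)) := by
  have := h_indep.isProbabilityMeasure
  have h_nonneg : 0 ≤ l + 2 := by linarith
  have h_coord : ∀ j, P.real {ω | (l + 2) * (b * √(Fintype.card ι)) ≤ |(∑ i, Y i ω) j|}
      ≤ 2 * exp (-l) := fun j => by
    simpa using measureReal_le_abs_sum_lap1_le hb h_card
      (fun i => (measurePreserving_apply_lapE hb j).fun_comp_hasLaw (hY i))
      (h_indep.comp (fun _ y => y j) fun _ => by fun_prop) l
  simpa only [Fintype.card_fin] using
    measureReal_sqrt_card_mul_lt_norm_le (by positivity) h_coord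

section ConditionalMean

variable {F : Type*} [MeasurableSpace F] {ν : Measure (ℝ × F)}

lemma integrable_fst_of_mem_Icc [IsFiniteMeasure ν] (hν : ∀ᵐ p ∂ν, p.1 ∈ Set.Icc 0 1) :
    Integrable (fun p => p.1) ν :=
  .of_mem_Icc 0 1 measurable_fst.aemeasurable hν

lemma integral_fst_mem_Icc [IsProbabilityMeasure ν] (hν : ∀ᵐ p ∂ν, p.1 ∈ Set.Icc 0 1) :
    ∫ p, p.1 ∂ν ∈ Set.Icc 0 1 :=
  (convex_Icc 0 1).integral_mem isClosed_Icc hν (integrable_fst_of_mem_Icc hν)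

lemma measureReal_le_abs_sum_fst_sub_integral_le [Nonempty ι] [IsProbabilityMeasure ν]
    {V : ι → Ω → ℝ × F} (hV : ∀ i, HasLaw (V i) ν P) (h_indep : iIndepFun V P)
    (hν : ∀ᵐ p ∂ν, p.1 ∈ Set.Icc 0 1) {l : ℝ} (hl : 1 ≤ l) :
    P.real {ω | l * √(Fintype.card ι) ≤ |∑ i, ((V i ω).1 - ∫ p, p.1 ∂ν)|} ≤ 2 * exp (-l) := by
  set ψ := ∫ p, p.1 ∂ν with hψ
  have h_zero : ∫ p, (p.1 - ψ) ∂ν = 0 := by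
    rw [integral_sub (integrable_fst_of_mem_Icc hν) (integrable_const ψ), ← hψ, integral_const,
      probReal_univ, one_smul, sub_self]
  have h_mem : ∀ᵐ p ∂ν, p.1 - ψ ∈ Set.Icc (0 - ψ) (1 - ψ) := by
    filter_upwards [hν] with p hp
    exact ⟨sub_le_sub_right hp.1 ψ, sub_le_sub_right hp.2 ψ⟩
  simpa using measureReal_le_abs_sum_comp_le hV h_indep (by fun_prop) (by simp) h_mem h_zero hl

lemma integral_fst_smul_eq_setIntegral {G : Type*} [NormedAddCommGroup G] [NormedSpace ℝ G]
    (hν : ∀ᵐ p ∂ν, p.1 = 0 ∨ p.1 = 1) (g : ℝ × F → G) :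
    ∫ p, p.1 • g p ∂ν = ∫ p in {p | p.1 = 1}, g p ∂ν := by
  have h_meas : MeasurableSet {p : ℝ × F | p.1 = 1} := measurable_fst (measurableSet_singleton 1)
  rw [← integral_indicator h_meas]
  refine integral_congr_ae ?_
  filter_upwards [hν] with p hp
  rcases hp with h | h <;> simp [Set.indicator, h]

lemma norm_setAverage_le {α G : Type*} [MeasurableSpace α] [NormedAddCommGroup G]
    [NormedSpace ℝ G] {μ : Measure α} {s : Set α} {f : α → G} {R : ℝ} (hR : 0 ≤ R)
    (hf : ∀ᵐ x ∂μ, ‖f x‖ ≤ R) : ‖⨍ x in s, f x ∂μ‖ ≤ R := by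
  by_cases hs : μ s = ⊤
  · simpa [setAverage_eq, Measure.real, hs] using hR
  · calc ‖⨍ x in s, f x ∂μ‖ = (μ.real s)⁻¹ * ‖∫ x in s, f x ∂μ‖ := by
          rw [setAverage_eq, norm_smul, norm_of_nonneg (inv_nonneg.2 measureReal_nonneg)]
      _ ≤ (μ.real s)⁻¹ * (R * μ.real s) := by
          gcongr
          exact norm_setIntegral_le_of_norm_le_const_ae (lt_top_iff_ne_top.2 hs)
            (ae_restrict_of_ae hf)
      _ = (μ.real s)⁻¹ * μ.real s * R := by ring
      _ ≤ R := mul_le_of_le_one_left hR inv_mul_le_one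

lemma measureReal_lt_norm_sum_fst_smul_sub_le [Nonempty ι] {d : ℕ}
    {ρ : Measure (ℝ × EuclideanSpace ℝ (Fin d))} [IsFiniteMeasure ρ]
    {V : ι → Ω → ℝ × EuclideanSpace ℝ (Fin d)}
    (hV : ∀ i, HasLaw (V i) ρ P) (h_indep : iIndepFun V P) {R : ℝ} (hR : 0 < R)
    (hν : ∀ᵐ p ∂ρ, (p.1 = 0 ∨ p.1 = 1) ∧ ‖p.2‖ ≤ R) {l : ℝ} (hl : 1 ≤ l) :
    P.real {ω | √d * (4 * R * (l * √(Fintype.card ι)))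
        < ‖∑ i, (V i ω).1 • ((V i ω).2 - ⨍ p in {p | p.1 = 1}, p.2 ∂ρ)‖}
      ≤ d * (2 * exp (-l)) := by
  have := h_indep.isProbabilityMeasure
  set lam := ⨍ p in {p | p.1 = 1}, p.2 ∂ρ
  have h_lam : ‖lam‖ ≤ R := norm_setAverage_le hR.le (hν.mono fun p hp => hp.2)
  have h_norm : ∀ᵐ p ∂ρ, ‖p.1 • (p.2 - lam)‖ ≤ 2 * R := by
    filter_upwards [hν] with p ⟨hp, hpR⟩
    have h_sub : ‖p.2 - lam‖ ≤ 2 * R := (norm_sub_le _ _).trans (by linarith)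
    rcases hp with h | h <;> simp [h, h_sub, hR.le]
  have h_int : Integrable (fun p : ℝ × EuclideanSpace ℝ (Fin d) => p.1 • (p.2 - lam)) ρ :=
    .of_bound (by fun_prop) (2 * R) h_norm
  have h_mean : ∫ p, p.1 • (p.2 - lam) ∂ρ = 0 := by
    rw [integral_fst_smul_eq_setIntegral (hν.mono fun p hp => hp.1)]
    exact setAverage_sub_setAverage (measure_ne_top _ _) _
  have h_coord_mean : ∀ j, ∫ p, (p.1 • (p.2 - lam)) j ∂ρ = 0 := fun j => by
    simpa [h_mean] using (EuclideanSpace.proj (𝕜 := ℝ) j).integral_comp_comm h_int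
  have h_coord_mem : ∀ j, ∀ᵐ p ∂ρ, (p.1 • (p.2 - lam)) j ∈ Set.Icc (-(2 * R)) (2 * R) :=
    fun j => h_norm.mono fun p hp => abs_le.1 ((PiLp.norm_apply_le _ j).trans hp)
  have h_coord : ∀ j, P.real {ω | 4 * R * (l * √(Fintype.card ι))
      ≤ |(∑ i, (V i ω).1 • ((V i ω).2 - lam)) j|} ≤ 2 * exp (-l) := fun j => by
    have h := measureReal_le_abs_sum_comp_le hV h_indep (by fun_prop) (by linarith)
      (h_coord_mem j) (h_coord_mean j) hl
    rw [show 2 * R - -(2 * R) = 4 * R by ring] at h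
    simpa using h
  simpa only [Fintype.card_fin] using
    measureReal_sqrt_card_mul_lt_norm_le (by positivity) h_coord

end ConditionalMean

end Tails

/-- The private estimate `λ̂ / (ψ̂ n)` of the conditional mean in a bin, computed from the samples
`s i = (bᵢ, vᵢ)` and from realizations `x i` and `y i` of the noises `L′ᵢ` and `Lᵢ`. The scalings
of the noise by `3` and by `3√d R` are part of the estimator. -/
noncomputable def privateConditionalMean {d n : ℕ} (R : ℝ)
    (s : Fin n → ℝ × EuclideanSpace ℝ (Fin d)) (x : Fin n → ℝ)
    (y : Fin n → EuclideanSpace ℝ (Fin d)) : EuclideanSpace ℝ (Fin d) :=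
  (((∑ i, (s i).1 + 3 * ∑ i, x i) / n) * n)⁻¹ •
    (∑ i, (s i).1 • (s i).2 + (3 * √d * R) • ∑ i, y i)

lemma norm_inv_smul_sub_le {E : Type*} [SeminormedAddCommGroup E] [NormedSpace ℝ E]
    {D m C : ℝ} {u v : E} (hm : 0 < m) (hD : m ≤ D) (h : ‖u - D • v‖ ≤ C) :
    ‖D⁻¹ • u - v‖ ≤ C / m := by
  have hD0 : 0 < D := hm.trans_le hD
  have : 0 ≤ C := (norm_nonneg _).trans h
  calc ‖D⁻¹ • u - v‖ = D⁻¹ * ‖u - D • v‖ := by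
        rw [← norm_of_nonneg (inv_nonneg.2 hD0.le), ← norm_smul, smul_sub,
          inv_smul_smul₀ hD0.ne', norm_of_nonneg (inv_nonneg.2 hD0.le)]
    _ ≤ m⁻¹ * C := by gcongr
    _ = C / m := by rw [mul_comm, div_eq_mul_inv]

section Deterministic

variable {d n : ℕ} {s : Fin n → ℝ × EuclideanSpace ℝ (Fin d)} {x : Fin n → ℝ}
  {y : Fin n → EuclideanSpace ℝ (Fin d)} {lam : EuclideanSpace ℝ (Fin d)} {ψ R T : ℝ}

lemma le_sum_fst_add_three_mul_sum (hd : 1 ≤ d) (hψ : 18 * d * T ≤ ψ * n)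
    (hs : |∑ i, ((s i).1 - ψ)| ≤ T) (hx : |∑ i, x i| ≤ 2 * T) :
    11 / 18 * (ψ * n) ≤ ∑ i, (s i).1 + 3 * ∑ i, x i := by
  have hT : 0 ≤ T := (abs_nonneg _).trans hs
  have h_sum : ∑ i, ((s i).1 - ψ) = ∑ i, (s i).1 - ψ * n := by
    simp [Finset.sum_sub_distrib, mul_comm]
  have h_dT : T ≤ d * T := le_mul_of_one_le_left hT (mod_cast hd)
  linarith [(abs_le.1 (h_sum ▸ hs)).1, (abs_le.1 hx).1]

lemma norm_sum_fst_smul_add_sub_le (hd : 1 ≤ d) (hR : 0 ≤ R) (hlam : ‖lam‖ ≤ R)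
    (hs : ‖∑ i, (s i).1 • ((s i).2 - lam)‖ ≤ √d * (4 * R * T)) (hx : |∑ i, x i| ≤ 2 * T)
    (hy : ‖∑ i, y i‖ ≤ √d * (2 * T)) :
    ‖∑ i, (s i).1 • (s i).2 + (3 * √d * R) • ∑ i, y i
        - (∑ i, (s i).1 + 3 * ∑ i, x i) • lam‖ ≤ (10 * d + 6) * (R * T) := by
  have hT : 0 ≤ T := by linarith [(abs_nonneg _).trans hx]
  have h_sqrt : √d ≤ d := by
    rw [sqrt_le_left (by positivity)]
    exact le_self_pow₀ (mod_cast hd) two_ne_zero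
  have h_decomp : ∑ i, (s i).1 • (s i).2 + (3 * √d * R) • ∑ i, y i
        - (∑ i, (s i).1 + 3 * ∑ i, x i) • lam
      = ∑ i, (s i).1 • ((s i).2 - lam) + (3 * √d * R) • ∑ i, y i - (3 * ∑ i, x i) • lam := by
    simp only [smul_sub, Finset.sum_sub_distrib, ← Finset.sum_smul, add_smul]
    abel
  calc _ ≤ ‖∑ i, (s i).1 • ((s i).2 - lam)‖ + 3 * √d * R * ‖∑ i, y i‖
        + 3 * |∑ i, x i| * ‖lam‖ := by
        rw [h_decomp]
        refine (norm_sub_le _ _).trans (add_le_add ((norm_add_le _ _).trans ?_) ?_)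
        · rw [norm_smul, norm_of_nonneg (by positivity)]
        · rw [norm_smul, norm_eq_abs, abs_mul, abs_of_pos (by norm_num : (0 : ℝ) < 3)]
    _ ≤ d * (4 * R * T) + 3 * √d * R * (√d * (2 * T)) + 3 * (2 * T) * R := by
        gcongr
        exact hs.trans (by gcongr)
    _ = (10 * d + 6) * (R * T) := by
        linear_combination 6 * R * T * mul_self_sqrt (Nat.cast_nonneg (α := ℝ) d)

lemma norm_privateConditionalMean_sub_le (hd : 1 ≤ d) (hn : n ≠ 0) (hR : 0 ≤ R) (hT : 0 < T)
    (hψ : 18 * d * T ≤ ψ * n) (hlam : ‖lam‖ ≤ R) (h_fst : |∑ i, ((s i).1 - ψ)| ≤ T)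
    (h_snd : ‖∑ i, (s i).1 • ((s i).2 - lam)‖ ≤ √d * (4 * R * T)) (hx : |∑ i, x i| ≤ 2 * T)
    (hy : ‖∑ i, y i‖ ≤ √d * (2 * T)) :
    ‖privateConditionalMean R s x y - lam‖ ≤ (19 * d + 29) * (R * T / (ψ * n)) := by
  have hψn : 0 < ψ * n := lt_of_lt_of_le (by positivity) hψ
  rw [privateConditionalMean, div_mul_cancel₀ _ (Nat.cast_ne_zero.2 hn)]
  calc _ ≤ (10 * d + 6) * (R * T) / (11 / 18 * (ψ * n)) :=
        norm_inv_smul_sub_le (by positivity) (le_sum_fst_add_three_mul_sum hd hψ h_fst hx)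
          (norm_sum_fst_smul_add_sub_le hd hR hlam h_snd hx hy)
    _ = 18 / 11 * (10 * d + 6) * (R * T / (ψ * n)) := by field_simp
    _ ≤ (19 * d + 29) * (R * T / (ψ * n)) := by
        gcongr
        linarith [Nat.cast_nonneg (α := ℝ) d]

lemma norm_privateConditionalMean_sub_le_of_div_le {α l : ℝ} (hα : α ∈ Set.Ioc (0 : ℝ) 1)
    (hR : 0 ≤ R) (hd : 1 ≤ d) (hn : n ≠ 0) (hl : 2 ≤ l) (hψ : 18 * d * l / (α * √n) ≤ ψ)
    (hlam : ‖lam‖ ≤ R) (h_fst : |∑ i, ((s i).1 - ψ)| ≤ l * √n)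
    (h_snd : ‖∑ i, (s i).1 • ((s i).2 - lam)‖ ≤ √d * (4 * R * (l * √n)))
    (hx : |∑ i, x i| ≤ (l + 2) * (α⁻¹ * √n)) (hy : ‖∑ i, y i‖ ≤ √d * ((l + 2) * (α⁻¹ * √n))) :
    ‖privateConditionalMean R s x y - lam‖ ≤ (19 * d + 29) * R * l / (α * ψ * √n) := by
  obtain ⟨hα0, hα1⟩ := hα
  have hn0 : (0 : ℝ) < n := by positivity
  set T := l * √n / α with hT
  have h_data : l * √n ≤ T := le_div_self (by positivity) hα0 hα1
  have h_noise : (l + 2) * (α⁻¹ * √n) ≤ 2 * T := by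
    calc (l + 2) * (α⁻¹ * √n) ≤ (2 * l) * (α⁻¹ * √n) := by gcongr; linarith
      _ = 2 * T := by rw [hT]; ring
  have hψT : 18 * d * T ≤ ψ * n := by
    calc 18 * d * T = 18 * d * l / (α * √n) * n := by
          rw [hT]
          field_simp
          rw [sq_sqrt hn0.le]
      _ ≤ ψ * n := by gcongr
  calc _ ≤ (19 * d + 29) * (R * T / (ψ * n)) :=
        norm_privateConditionalMean_sub_le hd hn hR (by positivity) hψT hlam
          (h_fst.trans h_data) (h_snd.trans (by gcongr)) (hx.trans h_noise)
          (hy.trans (by gcongr))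
    _ = (19 * d + 29) * R * l / (α * ψ * √n) := by
        rw [hT]
        field_simp
        rw [sq_sqrt hn0.le]

end Deterministic

lemma two_le_log {x : ℝ} (hx : 12 ≤ x) : 2 ≤ log x := by
  rw [le_log_iff_exp_le (by linarith), ← one_add_one_eq_two, exp_add]
  nlinarith [exp_one_lt_d9, exp_pos 1]

lemma two_le_of_div_le {α l : ℝ} {d n : ℕ} (hα : α ∈ Set.Ioc (0 : ℝ) 1) (hd : 1 ≤ d)
    (hn : n ≠ 0) (hl : 2 ≤ l) (h : 18 * d * l / (α * √n) ≤ 1) : 2 ≤ n := by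
  obtain ⟨hα0, hα1⟩ := hα
  have hd1 : (1 : ℝ) ≤ d := mod_cast hd
  have : (0 : ℝ) < n := by positivity
  have h_sqrt : 18 * d * l ≤ √n := ((div_le_one (by positivity)).1 h).trans
    (mul_le_of_le_one_left (sqrt_nonneg _) hα1)
  have h_one : 1 < √(n : ℝ) := by nlinarith
  exact_mod_cast (lt_sqrt zero_le_one).1 h_one

section Concentration

variable {Ω : Type*} [MeasurableSpace Ω] {P : Measure Ω} {d n : ℕ}
  {ν : Measure (ℝ × EuclideanSpace ℝ (Fin d))} [IsProbabilityMeasure ν]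
  {V : Fin n → Ω → ℝ × EuclideanSpace ℝ (Fin d)} {X : Fin n → Ω → ℝ}
  {Y : Fin n → Ω → EuclideanSpace ℝ (Fin d)} {α R ψ : ℝ} {lam : EuclideanSpace ℝ (Fin d)}

lemma measureReal_lt_norm_privateConditionalMean_sub_le (hV : ∀ i, HasLaw (V i) ν P)
    (hV_indep : iIndepFun V P) (hX : ∀ i, HasLaw (X i) (Lap1 α⁻¹) P) (hX_indep : iIndepFun X P)
    (hY : ∀ i, HasLaw (Y i) (LapE d α⁻¹) P) (hY_indep : iIndepFun Y P)
    (hα : α ∈ Set.Ioc (0 : ℝ) 1) (hR : 0 < R) (hd : 1 ≤ d) (hn : n ≠ 0)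
    (hν : ∀ᵐ p ∂ν, (p.1 = 0 ∨ p.1 = 1) ∧ ‖p.2‖ ≤ R) (hψ : ψ = ∫ p, p.1 ∂ν)
    (hlam : lam = ⨍ p in {p | p.1 = 1}, p.2 ∂ν) {l : ℝ} (hl : 2 ≤ l)
    (hψl : 18 * d * l / (α * √n) ≤ ψ) :
    P.real {ω | (19 * d + 29) * R * l / (α * ψ * √n)
        < ‖privateConditionalMean R (fun i => V i ω) (fun i => X i ω) (fun i => Y i ω) - lam‖}
      ≤ 4 * (d + 1) * exp (-l) := by
  have := hV_indep.isProbabilityMeasure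
  have : NeZero n := ⟨hn⟩
  have hα_inv : 0 < α⁻¹ := inv_pos.2 hα.1
  have h_mem : ∀ᵐ p ∂ν, p.1 ∈ Set.Icc (0 : ℝ) 1 :=
    hν.mono fun p hp => by rcases hp.1 with h | h <;> simp [h]
  have hψ1 : ψ ≤ 1 := hψ ▸ (integral_fst_mem_Icc h_mem).2
  have h_card : 2 ≤ Fintype.card (Fin n) := by
    rw [Fintype.card_fin]
    exact two_le_of_div_le hα hd hn hl (hψl.trans hψ1)
  have h_lam : ‖lam‖ ≤ R := hlam ▸ norm_setAverage_le hR.le (hν.mono fun p hp => hp.2)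
  have h_fst := measureReal_le_abs_sum_fst_sub_integral_le hV hV_indep h_mem (by linarith : 1 ≤ l)
  have h_snd := measureReal_lt_norm_sum_fst_smul_sub_le hV hV_indep hR hν (by linarith : 1 ≤ l)
  have h_lap1 := measureReal_le_abs_sum_lap1_le hα_inv h_card hX hX_indep l
  have h_lapE := measureReal_lt_norm_sum_lapE_le hα_inv h_card hY hY_indep (by linarith : -2 ≤ l)
  rw [Fintype.card_fin] at h_fst h_snd h_lap1 h_lapE
  rw [← hψ] at h_fst
  rw [← hlam] at h_snd
  calc _ ≤ P.real (({ω | l * √n ≤ |∑ i, ((V i ω).1 - ψ)|}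
          ∪ {ω | √d * (4 * R * (l * √n)) < ‖∑ i, (V i ω).1 • ((V i ω).2 - lam)‖})
        ∪ ({ω | (l + 2) * (α⁻¹ * √n) ≤ |∑ i, X i ω|}
          ∪ {ω | √d * ((l + 2) * (α⁻¹ * √n)) < ‖∑ i, Y i ω‖})) := by
        refine measureReal_mono fun ω (hω : _ < ‖_‖) => ?_
        contrapose! hω
        simp only [Set.mem_union, Set.mem_ofPred_eq, not_or, not_le, not_lt] at hω
        exact norm_privateConditionalMean_sub_le_of_div_le hα hR.le hd hn hl hψl h_lam
          hω.1.1.le hω.1.2 hω.2.1.le hω.2.2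
    _ ≤ (2 * exp (-l) + d * (2 * exp (-l))) + (2 * exp (-l) + d * (2 * exp (-l))) :=
        (measureReal_union_le _ _).trans <| add_le_add
          ((measureReal_union_le _ _).trans (add_le_add h_fst h_snd))
          ((measureReal_union_le _ _).trans (add_le_add h_lap1 h_lapE))
    _ = 4 * (d + 1) * exp (-l) := by ring

theorem private_conditional_mean_concentration_general (hV : ∀ i, HasLaw (V i) ν P)
    (hV_indep : iIndepFun V P) (hX : ∀ i, HasLaw (X i) (Lap1 α⁻¹) P) (hX_indep : iIndepFun X P)
    (hY : ∀ i, HasLaw (Y i) (LapE d α⁻¹) P) (hY_indep : iIndepFun Y P)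
    (hα : α ∈ Set.Ioc (0 : ℝ) 1) {δ : ℝ} (hδ : δ ∈ Set.Ioc (0 : ℝ) 1) (hR : 0 < R) (hd : 1 ≤ d)
    (hn : n ≠ 0) (hν : ∀ᵐ p ∂ν, (p.1 = 0 ∨ p.1 = 1) ∧ ‖p.2‖ ≤ R) (hψ : ψ = ∫ p, p.1 ∂ν)
    (hlam : lam = ⨍ p in {p | p.1 = 1}, p.2 ∂ν)
    (hψ_ge : 18 * d * log (24 * d / δ) / (α * √n) ≤ ψ) :
    1 - δ ≤ P.real {ω |
      ‖privateConditionalMean R (fun i => V i ω) (fun i => X i ω) (fun i => Y i ω) - lam‖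
        ≤ (19 * d + 29) * R * log (24 * d / δ) / (α * ψ * √n)} := by
  obtain ⟨hδ0, hδ1⟩ := hδ
  have := hV_indep.isProbabilityMeasure
  have hd1 : (1 : ℝ) ≤ d := mod_cast hd
  have h_log : 2 ≤ log (24 * d / δ) := two_le_log ((le_div_iff₀ hδ0).2 (by linarith))
  have h_fail := measureReal_lt_norm_privateConditionalMean_sub_le hV hV_indep hX hX_indep hY
    hY_indep hα hR hd hn hν hψ hlam h_log hψ_ge
  have h_δ : 4 * (d + 1) * exp (-log (24 * d / δ)) ≤ δ := by
    rw [exp_neg, exp_log (by positivity), inv_div, mul_div_assoc', div_le_iff₀ (by positivity)]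
    nlinarith
  rw [sub_le_iff_le_add, ← probReal_univ (μ := P)]
  refine le_trans ?_ ((measureReal_union_le _ _).trans (add_le_add_right (h_fail.trans h_δ) _))
  refine measureReal_mono fun ω _ => ?_
  rw [Set.mem_union]
  exact le_or_gt (α := ℝ) _ _

end Concentration

/-- utility of the Laplace-privatized conditional-mean estimate of the
LPLR-Update subroutine. With `(bᵢ, vᵢ)` i.i.d., `bᵢ ∈ {0,1}`, `‖vᵢ‖ ≤ R` a.s.,
`ψ = E[b₁]`, `λ = E[v₁ | b₁ = 1]`, privatized statistics
`ψ̂ = n⁻¹(Σ bᵢ + 3Σ L′ᵢ)` and `λ̂ = Σ bᵢ vᵢ + 3√d R Σ Lᵢ`, if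
`ψ ≥ 18 d ln(24d/δ)/(α√n)` and `n ≥ 2 ln(12/δ)` then with probability at least `1 − δ`,
`‖λ̂/(ψ̂ n) − λ‖ ≤ (19d + 29) R ln(24d/δ)/(α ψ √n)`. -/
theorem private_conditional_mean_concentration
    (α δ R : ℝ) (hα : α ∈ Set.Ioc (0 : ℝ) 1) (hδ : δ ∈ Set.Ioc (0 : ℝ) 1)
    (hR : 0 < R) (d : ℕ) (hd : 1 ≤ d) (n : ℕ)
    (hn : 2 * Real.log (12 / δ) ≤ n)
    (ν : Measure (ℝ × EuclideanSpace ℝ (Fin d))) [IsProbabilityMeasure ν]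
    (hb : ∀ᵐ p ∂ν, (p.1 = 0 ∨ p.1 = 1) ∧ ‖p.2‖ ≤ R)
    (ψ : ℝ) (hψdef : ψ = ∫ p, p.1 ∂ν)
    (lam : EuclideanSpace ℝ (Fin d))
    (hlamdef : lam = (ν {p | p.1 = 1}).toReal⁻¹ • ∫ p in {p | p.1 = 1}, p.2 ∂ν)
    (hψlb : 18 * d * Real.log (24 * d / δ) / (α * Real.sqrt n) ≤ ψ) :
    ENNReal.ofReal (1 - δ) ≤
      ((Measure.pi (fun _ : Fin n => ν)).prod
          ((Measure.pi (fun _ : Fin n => Lap1 α⁻¹)).prod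
            (Measure.pi (fun _ : Fin n => LapE d α⁻¹))))
        {ω | ‖(((∑ i, (ω.1 i).1 + 3 * ∑ i, ω.2.1 i) / n) * n)⁻¹ •
                (∑ i, (ω.1 i).1 • (ω.1 i).2
                  + (3 * Real.sqrt d * R) • ∑ i, ω.2.2 i) - lam‖
              ≤ (19 * d + 29) * R * Real.log (24 * d / δ) / (α * ψ * Real.sqrt n)} := by
  have := isProbabilityMeasure_lap1 (inv_pos.2 hα.1)
  have := isProbabilityMeasure_lapE d (inv_pos.2 hα.1)
  have hn0 : n ≠ 0 := by
    have h_log : 2 ≤ log (12 / δ) := two_le_log (le_div_self (by norm_num) hδ.1 hδ.2)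
    exact_mod_cast (by linarith : (0 : ℝ) < n).ne'
  set P := (Measure.pi fun _ : Fin n => ν).prod
    ((Measure.pi fun _ : Fin n => Lap1 α⁻¹).prod (Measure.pi fun _ : Fin n => LapE d α⁻¹))
  have hV : HasLaw Prod.fst (Measure.pi fun _ => ν) P := measurePreserving_fst.hasLaw
  have hX : HasLaw (fun ω => ω.2.1) (Measure.pi fun _ => Lap1 α⁻¹) P :=
    (measurePreserving_fst.comp measurePreserving_snd).hasLaw
  have hY : HasLaw (fun ω => ω.2.2) (Measure.pi fun _ => LapE d α⁻¹) P :=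
    (measurePreserving_snd.comp measurePreserving_snd).hasLaw
  exact ENNReal.ofReal_le_of_le_toReal <| private_conditional_mean_concentration_general
    (fun i => (measurePreserving_eval _ i).fun_comp_hasLaw hV) (iIndepFun_of_hasLaw_pi hV)
    (fun i => (measurePreserving_eval _ i).fun_comp_hasLaw hX) (iIndepFun_of_hasLaw_pi hX)
    (fun i => (measurePreserving_eval _ i).fun_comp_hasLaw hY) (iIndepFun_of_hasLaw_pi hY)
    hα hδ hR hd hn0 hb hψdef (hlamdef.trans (setAverage_eq _ _ _).symm) hψlb
end
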